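/- Simultaneous self-subsumption is symmetry-preserving: if F' = R(F) for a CNF formula F, then Aut_syn(F)_{{Lit(F')}} = Aut_syn(F) and Aut_syn(F)↓_{Lit(F')} ⊆ Aut_syn(F'). -/

import Mathlib

/-- A literal over a variable type `V`: a variable or its negation. -/
inductive Lit (V : Type) where
  | pos : V → Lit V
  | neg : V → Lit V
deriving DecidableEq

variable {V : Type} [DecidableEq V]

/-- Negation of a literal (so that double negation is the identity). -/
def Lit.negate : Lit V → Lit V
  | .pos v => .neg v
  | .neg v => .pos v

/-- The underlying variable of a literal. -/
def Lit.var : Lit V → V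
  | .pos v => v
  | .neg v => v

/-- A clause is a finite set of literals. -/
abbrev Clause (V : Type) := Finset (Lit V)

/-- A CNF formula is a finite set of clauses. -/
abbrev CNF (V : Type) := Finset (Clause V)

/-- `Var(F)`: the variables occurring in a formula. -/
def CNF.vars (F : CNF V) : Finset V := Finset.sup F (fun C => Finset.image Lit.var C)

/-- `Lit(F) = Var(F) ∪ {v̄ : v ∈ Var(F)}`. -/
def CNF.lits (F : CNF V) : Finset (Lit V) :=
  Finset.image Lit.pos (CNF.vars F) ∪ Finset.image Lit.neg (CNF.vars F)

/-- The value of a literal under a complete assignment (given on the variables,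
which determines a consistent complete assignment on all literals). -/
def Lit.val (σ : V → Bool) : Lit V → Bool
  | .pos v => σ v
  | .neg v => !(σ v)

/-- `C[σ]`: delete from `C` every literal mapped to `⊥` by `σ`
(i.e. keep `l` with `¬l ∉ σ`). -/
def Clause.reduce (σ : V → Bool) (C : Clause V) : Clause V :=
  Finset.filter (fun l => Lit.val σ (Lit.negate l) = false) C

/-- `F[σ]`: delete every clause containing a literal mapped to `⊤` by `σ`
(for a complete assignment: every clause containing no false literal is kept)
and delete from each remaining clause every literal mapped to `⊥`. -/
def CNF.reduce (F : CNF V) (σ : V → Bool) : CNF V :=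
  Finset.image (Clause.reduce σ) (Finset.filter (fun C => ∀ l ∈ C, Lit.val σ l = false) F)

/-- Apply a map on literals elementwise to clauses and formulas. -/
def CNF.map (φ : Lit V → Lit V) (F : CNF V) : CNF V :=
  Finset.image (fun C => Finset.image φ C) F

/-- `φ` is a syntactic symmetry of `F`: a bijection of `Lit(F)` respecting
negation with `φ(F) = F`. -/
def IsSynSym (F : CNF V) (φ : Lit V → Lit V) : Prop :=
  Set.BijOn φ (CNF.lits F : Set (Lit V)) (CNF.lits F : Set (Lit V)) ∧
  (∀ l ∈ CNF.lits F, φ (Lit.negate l) = Lit.negate (φ l)) ∧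
  CNF.map φ F = F

/-- `φ` is a semantic symmetry of `F`: a bijection of `Lit(F)` respecting
negation with `F[σ] = φ(F)[σ]` for every complete assignment `σ`. -/
def IsSemSym (F : CNF V) (φ : Lit V → Lit V) : Prop :=
  Set.BijOn φ (CNF.lits F : Set (Lit V)) (CNF.lits F : Set (Lit V)) ∧
  (∀ l ∈ CNF.lits F, φ (Lit.negate l) = Lit.negate (φ l)) ∧
  ∀ σ : V → Bool, CNF.reduce F σ = CNF.reduce (CNF.map φ F) σ

/-- Extend a map defined on the literal set `S` by the identity outside `S`. -/
def extendId (S : Finset (Lit V)) (φ : Lit V → Lit V) : Lit V → Lit V :=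
  fun l => if l ∈ S then φ l else l

/-- `F[l ↦ ⊤]`: delete every clause containing `l` and delete `l̄` from every
remaining clause. -/
def CNF.assignTrue (F : CNF V) (l : Lit V) : CNF V :=
  Finset.image (fun C => Finset.erase C (Lit.negate l)) (Finset.filter (fun C => l ∉ C) F)

/-- `f_F(C₁, C, x)` holds for some `C₁ ∈ F`: the literal `x` can be removed
from the clause `C` by self-subsuming resolution in `F`. -/
def Removable (F : CNF V) (C : Clause V) (x : Lit V) : Prop :=
  x ∈ C ∧ ∃ C₁ ∈ F, Lit.negate x ∈ C₁ ∧ C₁.erase (Lit.negate x) ⊂ C.erase x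

open Classical in
/-- `r_F(C)`: if there is exactly one literal removable from `C` by
self-subsuming resolution in `F`, remove it; otherwise leave `C` unchanged. -/
noncomputable def rFun (F : CNF V) (C : Clause V) : Clause V :=
  if h : ∃! x : Lit V, Removable F C x then C.erase h.choose else C

/-- Simultaneous self-subsumption: `R(F) = {r_F(C) : C ∈ F}`. -/
noncomputable def RFun (F : CNF V) : CNF V := Finset.image (rFun F) F

/-!
Self-subsumption commutes with renaming literals: if `φ` is injective on `Lit(F)` and respects
negation, then `x` is removable from `C` in `F` iff `φ x` is removable from `φ(C)` in `φ(F)`. Hence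
`φ` carries a unique removable literal to a unique removable literal, and `R(φ(F)) = φ(R(F))`. A
symmetry has `φ(F) = F`, so it fixes `R(F)`; since `Lit(R(F)) ⊆ Lit(F)`, its bijectivity and
compatibility with negation are inherited.
-/

section FinsetImage

variable {α β : Type*} [DecidableEq β] {f : α → β} {s t u : Finset α} {a : α}

theorem mem_finsetImage_iff_of_injOn (hf : Set.InjOn f u) (hs : s ⊆ u) (ha : a ∈ u) :
    f a ∈ s.image f ↔ a ∈ s := by
  exact_mod_cast hf.mem_image_iff (Finset.coe_subset.2 hs) ha

theorem finsetImage_ssubset_finsetImage_iff_of_injOn (hf : Set.InjOn f u) (hs : s ⊆ u)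
    (ht : t ⊆ u) : s.image f ⊂ t.image f ↔ s ⊂ t := by
  exact_mod_cast hf.image_ssubset_image_iff (Finset.coe_subset.2 hs) (Finset.coe_subset.2 ht)

theorem finsetImage_erase_of_injOn [DecidableEq α] (hf : Set.InjOn f u) (hs : s ⊆ u)
    (ha : a ∈ u) : (s.erase a).image f = (s.image f).erase (f a) := by
  refine Finset.Subset.antisymm ?_ (Finset.erase_image_subset_image_erase f s a)
  refine Finset.image_subset_iff.2 fun b hb => ?_
  obtain ⟨hne, hbs⟩ := Finset.mem_erase.1 hb
  exact Finset.mem_erase.2 ⟨hf.ne (hs hbs) ha hne, Finset.mem_image_of_mem f hbs⟩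

end FinsetImage

variable {F G : CNF V} {C : Clause V} {φ : Lit V → Lit V} {x : Lit V}

theorem Lit.negate_negate {W : Type} (l : Lit W) : l.negate.negate = l := by
  cases l <;> rfl

namespace CNF

theorem mem_vars {v : V} : v ∈ vars F ↔ ∃ C ∈ F, Lit.pos v ∈ C ∨ Lit.neg v ∈ C := by
  simp only [vars, Finset.mem_sup, Finset.mem_image]
  refine exists_congr fun C => and_congr_right fun _ => ⟨?_, ?_⟩
  · rintro ⟨_ | _, hl, rfl⟩
    exacts [Or.inl hl, Or.inr hl]
  · rintro (hl | hl) <;> exact ⟨_, hl, rfl⟩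

theorem mem_lits {l : Lit V} : l ∈ lits F ↔ ∃ C ∈ F, l ∈ C ∨ l.negate ∈ C := by
  cases l <;> simp [lits, mem_vars, Lit.negate, or_comm]

theorem subset_lits (hC : C ∈ F) : C ⊆ lits F :=
  fun _ hl => mem_lits.2 ⟨C, hC, Or.inl hl⟩

theorem negate_mem_lits (hx : x ∈ lits F) : x.negate ∈ lits F := by
  obtain ⟨C, hC, hxC⟩ := mem_lits.1 hx
  exact mem_lits.2 ⟨C, hC, by rwa [Lit.negate_negate, or_comm]⟩

theorem lits_subset_iff {S : Finset (Lit V)} (hS : ∀ l ∈ S, l.negate ∈ S) :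
    lits F ⊆ S ↔ ∀ C ∈ F, C ⊆ S := by
  refine ⟨fun h C hC => (subset_lits hC).trans h, fun h l hl => ?_⟩
  obtain ⟨C, hC, hlC | hlC⟩ := mem_lits.1 hl
  · exact h C hC hlC
  · exact l.negate_negate ▸ hS _ (h C hC hlC)

theorem image_mem_map (hC : C ∈ F) : C.image φ ∈ map φ F :=
  Finset.mem_image_of_mem _ hC

theorem lits_map (hneg : ∀ l ∈ lits F, φ l.negate = (φ l).negate) :
    lits (map φ F) = (lits F).image φ := by
  refine Finset.Subset.antisymm ((lits_subset_iff ?_).2 ?_) (Finset.image_subset_iff.2 ?_)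
  · simp only [Finset.forall_mem_image]
    intro l hl
    exact hneg l hl ▸ Finset.mem_image_of_mem φ (negate_mem_lits hl)
  · simp only [map, Finset.forall_mem_image]
    exact fun C hC => Finset.image_subset_image (subset_lits hC)
  · intro l hl
    obtain ⟨C, hC, hlC⟩ := mem_lits.1 hl
    refine mem_lits.2 ⟨C.image φ, image_mem_map hC, ?_⟩
    rw [← hneg l hl]
    exact hlC.imp (Finset.mem_image_of_mem φ) (Finset.mem_image_of_mem φ)

end CNF

theorem rFun_eq_erase (hu : ∃! y, Removable F C y) (hx : Removable F C x) :
    rFun F C = C.erase x := by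
  rw [rFun, dif_pos hu, hu.unique hu.choose_spec.1 hx]

theorem rFun_eq_self (hu : ¬∃! y, Removable F C y) : rFun F C = C :=
  dif_neg hu

theorem rFun_subset (F : CNF V) (C : Clause V) : rFun F C ⊆ C := by
  unfold rFun
  split_ifs
  exacts [Finset.erase_subset _ _, subset_rfl]

theorem lits_RFun_subset (F : CNF V) : CNF.lits (RFun F) ⊆ CNF.lits F := by
  rw [CNF.lits_subset_iff fun _ => CNF.negate_mem_lits]
  simp only [RFun, Finset.forall_mem_image]
  exact fun C hC => (rFun_subset F C).trans (CNF.subset_lits hC)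

/-- `φ` renames the literals of `F`: it is injective on `Lit(F)` and respects negation there. Unlike
a syntactic symmetry it need not preserve `Lit(F)` or `F`. These are the maps with which `R`
commutes. -/
structure IsRenaming (F : CNF V) (φ : Lit V → Lit V) : Prop where
  injOn : Set.InjOn φ (CNF.lits F)
  map_negate : ∀ l ∈ CNF.lits F, φ l.negate = (φ l).negate

namespace IsRenaming

theorem removable_image_iff (hφ : IsRenaming F φ) (hC : C ⊆ CNF.lits F) (hx : x ∈ CNF.lits F) :
    Removable (CNF.map φ F) (C.image φ) (φ x) ↔ Removable F C x := by
  have hnx := CNF.negate_mem_lits hx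
  simp only [Removable, CNF.map, Finset.exists_mem_image]
  refine and_congr (mem_finsetImage_iff_of_injOn hφ.injOn hC hx)
    (exists_congr fun D => and_congr_right fun hD => ?_)
  have hD := CNF.subset_lits hD
  rw [← hφ.map_negate x hx, mem_finsetImage_iff_of_injOn hφ.injOn hD hnx,
    ← finsetImage_erase_of_injOn hφ.injOn hD hnx, ← finsetImage_erase_of_injOn hφ.injOn hC hx,
    finsetImage_ssubset_finsetImage_iff_of_injOn hφ.injOn ((Finset.erase_subset _ _).trans hD)
      ((Finset.erase_subset _ _).trans hC)]

theorem existsUnique_removable_image_iff (hφ : IsRenaming F φ) (hC : C ⊆ CNF.lits F) :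
    (∃! y, Removable (CNF.map φ F) (C.image φ) y) ↔ ∃! x, Removable F C x := by
  have removable_iff {z : Lit V} (hz : z ∈ C) := hφ.removable_image_iff hC (hC hz)
  constructor
  · rintro ⟨y, hy, hy_unique⟩
    obtain ⟨x, hxC, rfl⟩ := Finset.mem_image.1 hy.1
    refine ⟨x, (removable_iff hxC).1 hy, fun z hz => ?_⟩
    exact hφ.injOn (hC hz.1) (hC hxC) (hy_unique _ ((removable_iff hz.1).2 hz))
  · rintro ⟨x, hx, hx_unique⟩
    refine ⟨φ x, (removable_iff hx.1).2 hx, fun y hy => ?_⟩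
    obtain ⟨z, hzC, rfl⟩ := Finset.mem_image.1 hy.1
    rw [hx_unique z ((removable_iff hzC).1 hy)]

theorem rFun_image (hφ : IsRenaming F φ) (hC : C ⊆ CNF.lits F) :
    rFun (CNF.map φ F) (C.image φ) = (rFun F C).image φ := by
  have hu_iff := hφ.existsUnique_removable_image_iff hC
  by_cases hu : ∃! x, Removable F C x
  · obtain ⟨x, hx⟩ := hu.exists
    have hxF := hC hx.1
    rw [rFun_eq_erase hu hx, finsetImage_erase_of_injOn hφ.injOn hC hxF]
    exact rFun_eq_erase (hu_iff.2 hu) ((hφ.removable_image_iff hC hxF).2 hx)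
  · rw [rFun_eq_self hu, rFun_eq_self (hu_iff.not.2 hu)]

theorem RFun_map (hφ : IsRenaming F φ) : RFun (CNF.map φ F) = CNF.map φ (RFun F) := by
  simp only [RFun, CNF.map, Finset.image_image]
  exact Finset.image_congr fun C hC => hφ.rFun_image (CNF.subset_lits hC)

end IsRenaming

theorem IsSynSym.isRenaming (h : IsSynSym F φ) : IsRenaming F φ :=
  ⟨h.1.injOn, h.2.1⟩

theorem IsRenaming.mono (hφ : IsRenaming F φ) (hGF : CNF.lits G ⊆ CNF.lits F) : IsRenaming G φ :=
  ⟨hφ.injOn.mono (Finset.coe_subset.2 hGF), fun l hl => hφ.map_negate l (hGF hl)⟩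

theorem IsRenaming.isSynSym (hφ : IsRenaming F φ) (hmap : CNF.map φ F = F) : IsSynSym F φ := by
  have image_lits : φ '' (CNF.lits F) = CNF.lits F := by
    rw [← Finset.coe_image, ← CNF.lits_map hφ.map_negate, hmap]
  have bijOn_image := hφ.injOn.bijOn_image
  rw [image_lits] at bijOn_image
  exact ⟨bijOn_image, hφ.map_negate, hmap⟩

theorem IsSynSym.isSynSym_RFun (h : IsSynSym F φ) : IsSynSym (RFun F) φ := by
  refine (h.isRenaming.mono (lits_RFun_subset F)).isSynSym ?_
  rw [← h.isRenaming.RFun_map, h.2.2]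

/-- Simultaneous self-subsumption is symmetry-preserving: for
`F' = R(F)`, every syntactic symmetry of `F` setwise stabilizes `Lit(F')`
(so `Aut_syn(F)_{{Lit(F')}} = Aut_syn(F)`) and its restriction to `Lit(F')`
is a syntactic symmetry of `F'` (so `Aut_syn(F)↓_{Lit(F')} ⊆ Aut_syn(F')`). -/
theorem simultaneous_self_subsumption_symmetry_preserving (F : CNF V) :
    (∀ φ : Lit V → Lit V, IsSynSym F φ →
        φ '' (CNF.lits (RFun F) : Set (Lit V)) = (CNF.lits (RFun F) : Set (Lit V))) ∧
    (∀ φ : Lit V → Lit V, IsSynSym F φ →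
        φ '' (CNF.lits (RFun F) : Set (Lit V)) = (CNF.lits (RFun F) : Set (Lit V)) →
        IsSynSym (RFun F) φ) := by
  exact ⟨fun _ h => h.isSynSym_RFun.1.image_eq, fun _ h _ => h.isSynSym_RFun⟩
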